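/- Every finite connected claw-free chordal graph G has a unique clique tree: any two clique trees of G (trees on the set of maximal cliques of G) have the same edge set. -/

import Mathlib

/-!
The proof rests on one property of a clique tree `T` of a connected claw-free graph: if `Q Q'` is
an edge of `T`, then `Q` and `Q'` are the only maximal cliques containing `Q ∩ Q'`
(`eq_or_eq_of_inter_subset`).

To see this, delete the edge `Q Q'` from `T`, which separates `Q` from `Q'`. A vertex `v` outside
`S = Q ∩ Q'` has its set of cliques untouched, so all cliques containing `v` lie on the same side
(`reachable_deleteEdge`); in particular vertices outside `S` belonging to different sides are
nonadjacent, and `S` is nonempty because `G` is connected. Suppose `R ≠ Q, Q'` contains `S` and,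
say, is not on the side of `Q'`. Choose nonadjacent `q ∈ Q \ R` and `r ∈ R \ Q`, some
`x ∈ Q' \ Q` and some `s ∈ S`. Then `s` is adjacent to `q`, `r`, `x`, which are pairwise
nonadjacent: a claw.

Now let `Q Q'` be an edge of `T₁` and let `R` be the neighbour of `Q` on the path of `T₂` from `Q`
to `Q'`. Every vertex of `Q ∩ Q'` lies in all cliques of this path, so `Q ∩ Q' ⊆ R`, whence
`R = Q'` and `Q Q'` is an edge of `T₂`. By symmetry the two trees coincide.
-/

open SimpleGraph

/-- A set `S` of nodes of a host graph `H` induces a path in `H`: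
there is an enumeration of `S` such that two nodes of `S` are adjacent
in `H` iff they are consecutive in the enumeration. -/
def InducesPath {β : Type*} (H : SimpleGraph β) (S : Set β) : Prop :=
  ∃ (n : ℕ) (f : Fin (n + 1) → β), Function.Injective f ∧ Set.range f = S ∧
    ∀ i j : Fin (n + 1), H.Adj (f i) (f j) ↔ (i.val + 1 = j.val ∨ j.val + 1 = i.val)

/-- Two node sets are non-crossing in a host graph `H`: each set difference
induces a connected (possibly empty) subgraph of `H`. -/
def NonCrossing {β : Type*} (H : SimpleGraph β) (S S' : Set β) : Prop :=
  (H.induce (S \ S')).Preconnected ∧ (H.induce (S' \ S)).Preconnected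

/-- The claw `K_{1,3}`: vertex `0` adjacent to `1`, `2`, `3`, which are pairwise nonadjacent. -/
def claw : SimpleGraph (Fin 4) := SimpleGraph.fromRel (fun a b => a = 0 ∨ b = 0)

/-- A graph is claw-free when it has no induced subgraph isomorphic to `K_{1,3}`. -/
def ClawFree {V : Type*} (G : SimpleGraph V) : Prop := ¬ Nonempty (claw ↪g G)

/-- A graph is chordal when it has no induced cycle of length at least four. -/
def Chordal {V : Type*} (G : SimpleGraph V) : Prop :=
  ∀ n : ℕ, 4 ≤ n → ¬ Nonempty (cycleGraph n ↪g G)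

/-- The 3-sun: triangle `0,1,2` and pairwise nonadjacent vertices `3,4,5` with
`3 ~ 0,1`; `4 ~ 1,2`; `5 ~ 2,0`. -/
def threeSun : SimpleGraph (Fin 6) := SimpleGraph.fromRel (fun a b =>
  (a = 0 ∧ b = 1) ∨ (a = 0 ∧ b = 2) ∨ (a = 1 ∧ b = 2) ∨
  (a = 3 ∧ b = 0) ∨ (a = 3 ∧ b = 1) ∨
  (a = 4 ∧ b = 1) ∨ (a = 4 ∧ b = 2) ∨
  (a = 5 ∧ b = 2) ∨ (a = 5 ∧ b = 0))

/-- The net: triangle `0,1,2` with pendant vertices `3 ~ 0`, `4 ~ 1`, `5 ~ 2`. -/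
def net : SimpleGraph (Fin 6) := SimpleGraph.fromRel (fun a b =>
  (a = 0 ∧ b = 1) ∨ (a = 0 ∧ b = 2) ∨ (a = 1 ∧ b = 2) ∨
  (a = 3 ∧ b = 0) ∨ (a = 4 ∧ b = 1) ∨ (a = 5 ∧ b = 2))

/-- `s` is a maximal clique of `G`. -/
def IsMaxClique {V : Type*} (G : SimpleGraph V) (s : Set V) : Prop :=
  G.IsClique s ∧ ∀ t : Set V, G.IsClique t → s ⊆ t → s = t

/-- `x` is an endpoint of the set `S` (inducing a path in `T`): `x ∈ S` and
`x` has at most one neighbour inside `S`. -/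
def IsPathEnd {β : Type*} (T : SimpleGraph β) (S : Set β) (x : β) : Prop :=
  x ∈ S ∧ {y ∈ S | T.Adj x y}.Subsingleton

/-- `x` is a terminal of the model `P` in `T`: it is an endpoint of every path containing it. -/
def IsTerminal {V β : Type*} (T : SimpleGraph β) (P : V → Set β) (x : β) : Prop :=
  ∀ v : V, x ∈ P v → IsPathEnd T (P v) x

/-- `x` is a junction of the model `P` in `T`: it is an internal (non-endpoint) node of
every path containing it. -/
def IsJunction {V β : Type*} (T : SimpleGraph β) (P : V → Set β) (x : β) : Prop :=
  ∀ v : V, x ∈ P v → ¬ IsPathEnd T (P v) x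

/-- `x` is mixed: neither a terminal nor a junction. -/
def IsMixed {V β : Type*} (T : SimpleGraph β) (P : V → Set β) (x : β) : Prop :=
  ¬ IsTerminal T P x ∧ ¬ IsJunction T P x

/-- In the tree `T` rooted at `r`, `a` is an ancestor of `b`:
`a` lies on the unique path from `b` to `r`. -/
def Ancestor {β : Type*} (T : SimpleGraph β) (r a b : β) : Prop :=
  ∀ w : T.Walk b r, w.IsPath → a ∈ w.support

/-- `S` is a dominating set of `G`. -/
def IsDom {V : Type*} (G : SimpleGraph V) (S : Set V) : Prop :=
  ∀ v : V, v ∈ S ∨ ∃ u ∈ S, G.Adj u v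

/-- `S` is a connected dominating set of `G` (nonempty with connected induced subgraph). -/
def IsConnDom {V : Type*} (G : SimpleGraph V) (S : Set V) : Prop :=
  IsDom G S ∧ (G.induce S).Connected

/-- Two vertices are twins when they have the same closed neighbourhood. -/
def Twins {V : Type*} (G : SimpleGraph V) (u v : V) : Prop :=
  insert u (G.neighborSet u) = insert v (G.neighborSet v)

/-- A path `z 0, …, z (k-1)` in `T` (with `k ≥ 3` nodes) whose two end nodes are terminals
and whose inner nodes all have degree two in `T`. -/
def TerminalPath {V β : Type*} (T : SimpleGraph β) (P : V → Set β) (k : ℕ) (z : ℕ → β) : Prop :=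
  3 ≤ k ∧ (∀ i j, i < k → j < k → z i = z j → i = j) ∧
  (∀ i, i + 1 < k → T.Adj (z i) (z (i + 1))) ∧
  IsTerminal T P (z 0) ∧ IsTerminal T P (z (k - 1)) ∧
  ∀ i, 0 < i → i + 1 < k → (T.neighborSet (z i)).ncard = 2

/-- Edge part of type (1): the three edges incident to a junction `x`,
whose three neighbours are all terminals. -/
def StarPart {V β : Type*} (T : SimpleGraph β) (P : V → Set β) (p : Set (Sym2 β)) : Prop :=
  ∃ x : β, IsJunction T P x ∧ (T.neighborSet x).ncard = 3 ∧
    (∀ y ∈ T.neighborSet x, IsTerminal T P y) ∧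
    p = {e | e ∈ T.edgeSet ∧ x ∈ e}

/-- Edge part of type (2): the edges of a path `z 0, …, z k` in `T` whose two end nodes
are terminals and each of whose internal nodes has degree two in `T` and is mixed. -/
def PathPart {V β : Type*} (T : SimpleGraph β) (P : V → Set β) (p : Set (Sym2 β)) : Prop :=
  ∃ (k : ℕ) (z : ℕ → β), 1 ≤ k ∧
    (∀ i j, i ≤ k → j ≤ k → z i = z j → i = j) ∧
    (∀ i, i < k → T.Adj (z i) (z (i + 1))) ∧
    IsTerminal T P (z 0) ∧ IsTerminal T P (z k) ∧
    (∀ i, 0 < i → i < k → (T.neighborSet (z i)).ncard = 2 ∧ IsMixed T P (z i)) ∧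
    p = {e | ∃ i, i < k ∧ e = s(z i, z (i + 1))}

/-- `v` is a cut-vertex of `G`: deleting `v` leaves a disconnected graph. -/
def IsCutVertex {V : Type*} (G : SimpleGraph V) (v : V) : Prop :=
  ¬ (G.induce {u | u ≠ v}).Preconnected

/-- `B` is (the vertex set of) a block of `G`: a maximal connected subgraph
having no cut-vertex of its own. -/
def IsBlock {V : Type*} (G : SimpleGraph V) (B : Set V) : Prop :=
  (G.induce B).Connected ∧ (∀ v ∈ B, (G.induce (B \ {v})).Preconnected) ∧
  ∀ B' : Set V, B ⊆ B' → (G.induce B').Connected →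
    (∀ v ∈ B', (G.induce (B' \ {v})).Preconnected) → B = B'

/-- The node type of the block-cutpoint tree: cut-vertices and blocks of `G`. -/
def BCVert {V : Type*} (G : SimpleGraph V) : Type _ :=
  {v : V // IsCutVertex G v} ⊕ {B : Set V // IsBlock G B}

/-- The block-cutpoint tree of `G`: a cut-vertex `c` is joined to a block `B`
exactly when `c ∈ B`. -/
def bcGraph {V : Type*} (G : SimpleGraph V) : SimpleGraph (BCVert G) :=
  SimpleGraph.fromRel (fun a b =>
    ∃ (c : {v : V // IsCutVertex G v}) (B : {B : Set V // IsBlock G B}),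
      a = Sum.inl c ∧ b = Sum.inr B ∧ (c : V) ∈ (B : Set V))

section CliqueTree

variable {V : Type*} {G : SimpleGraph V}

lemma exists_isMaxClique_of_adj [Finite V] {u v : V} (h : G.Adj u v) :
    ∃ C : {s : Set V // IsMaxClique G s}, u ∈ C.val ∧ v ∈ C.val := by
  have hcl : G.IsClique ({u, v} : Set V) := by
    rw [SimpleGraph.isClique_pair]
    exact fun _ => h
  obtain ⟨m, hle, hm⟩ :=
    (Set.toFinite {s : Set V | G.IsClique s}).exists_le_maximal hcl
  exact ⟨⟨m, hm.prop, fun t ht hmt => hm.eq_of_subset ht hmt⟩,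
    hle (by simp), hle (by simp)⟩

lemma IsMaxClique.exists_not_adj {A : Set V} (hA : IsMaxClique G A) {v : V} (hv : v ∉ A) :
    ∃ a ∈ A, ¬ G.Adj v a := by
  by_contra! h
  have hcl : G.IsClique (insert v A) := hA.1.insert fun b hb _ => h b hb
  exact hv ((hA.2 _ hcl (Set.subset_insert v A)).symm ▸ Set.mem_insert v A)

lemma IsMaxClique.exists_mem_notMem {A B : Set V} (hA : IsMaxClique G A) (hB : IsMaxClique G B)
    (hne : A ≠ B) : ∃ v ∈ A, v ∉ B :=
  Set.not_subset.mp fun h => hne (hA.2 B hB.1 h)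

lemma ClawFree.false_of_claw (hclaw : ClawFree G) {s a b c : V}
    (ha : G.Adj s a) (hb : G.Adj s b) (hc : G.Adj s c)
    (hab : a ≠ b) (hac : a ≠ c) (hbc : b ≠ c)
    (nab : ¬ G.Adj a b) (nac : ¬ G.Adj a c) (nbc : ¬ G.Adj b c) : False := by
  refine hclaw ⟨⟨⟨![s, a, b, c], ?_⟩, ?_⟩⟩
  · intro i j h
    have h1 := ha.ne
    have h2 := hb.ne
    have h3 := hc.ne
    fin_cases i <;> fin_cases j <;> simp_all
  · intro i j
    have nba : ¬ G.Adj b a := fun h => nab h.symm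
    have nca : ¬ G.Adj c a := fun h => nac h.symm
    have ncb : ¬ G.Adj c b := fun h => nbc h.symm
    change G.Adj (![s, a, b, c] i) (![s, a, b, c] j) ↔ claw.Adj i j
    fin_cases i <;> fin_cases j <;>
      simp [claw, ha, hb, hc, ha.symm, hb.symm, hc.symm, nab, nac, nbc, nba, nca, ncb]

variable {T : SimpleGraph {s : Set V // IsMaxClique G s}} {Q Q' R : {s : Set V // IsMaxClique G s}}

/-- Deleting the edge `Q Q'` keeps the cliques containing `v` connected unless `v ∈ Q ∩ Q'`. -/
lemma reachable_deleteEdge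
    (hK : ∀ v : V, (T.induce {x : {s : Set V // IsMaxClique G s} | v ∈ x.val}).Connected)
    {v : V} (hv : ¬ (v ∈ Q.val ∧ v ∈ Q'.val)) {X Y : {s : Set V // IsMaxClique G s}}
    (hX : v ∈ X.val) (hY : v ∈ Y.val) : (T.deleteEdges {s(Q, Q')}).Reachable X Y := by
  let f : T.induce {x : {s : Set V // IsMaxClique G s} | v ∈ x.val} →g
      T.deleteEdges {s(Q, Q')} :=
    { toFun := Subtype.val
      map_rel' := by
        rintro ⟨A, hA⟩ ⟨B, hB⟩ h
        rw [SimpleGraph.deleteEdges_adj]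
        refine ⟨h, fun he => hv ?_⟩
        rcases Sym2.eq_iff.mp (Set.mem_singleton_iff.mp he) with ⟨rfl, rfl⟩ | ⟨rfl, rfl⟩
        · exact ⟨hA, hB⟩
        · exact ⟨hB, hA⟩ }
  exact ((hK v).preconnected ⟨X, hX⟩ ⟨Y, hY⟩).map f

lemma not_reachable_deleteEdge (hT : T.IsTree) (h : T.Adj Q Q') :
    ¬ (T.deleteEdges {s(Q, Q')}).Reachable Q Q' :=
  SimpleGraph.isBridge_iff.mp (SimpleGraph.isAcyclic_iff_forall_adj_isBridge.mp hT.isAcyclic h)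

/-- The separator of an edge of a clique tree of a connected graph is nonempty. -/
lemma exists_mem_inter [Finite V] (hconn : G.Connected) (hT : T.IsTree)
    (hK : ∀ v : V, (T.induce {x : {s : Set V // IsMaxClique G s} | v ∈ x.val}).Connected)
    (h : T.Adj Q Q') : ∃ s, s ∈ Q.val ∧ s ∈ Q'.val := by
  by_contra! hS
  have hne : Q.val ≠ Q'.val := fun e => h.ne (Subtype.ext e)
  obtain ⟨q, hq, -⟩ := Q.2.exists_mem_notMem Q'.2 hne
  obtain ⟨q', hq', -⟩ := Q'.2.exists_mem_notMem Q.2 hne.symm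
  have key : ∀ u v : V, G.Walk u v → ∀ X Y : {s : Set V // IsMaxClique G s},
      u ∈ X.val → v ∈ Y.val → (T.deleteEdges {s(Q, Q')}).Reachable X Y := by
    intro u v w
    induction w with
    | nil => exact fun X Y hX hY => reachable_deleteEdge hK (fun h => hS _ h.1 h.2) hX hY
    | cons hadj _ ih =>
      intro X Y hX hY
      obtain ⟨C, hu, hv⟩ := exists_isMaxClique_of_adj hadj
      exact (reachable_deleteEdge hK (fun h => hS _ h.1 h.2) hX hu).trans (ih C Y hv hY)
  obtain ⟨w⟩ := hconn.preconnected q q'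
  exact not_reachable_deleteEdge hT h (key q q' w Q Q' hq hq')

/-- The one-sided form of `eq_or_eq_of_inter_subset`, where `R` is not on the side of `Q'` once the
edge `Q Q'` is deleted. -/
lemma eq_of_inter_subset_of_not_reachable [Finite V] (hconn : G.Connected) (hclaw : ClawFree G)
    (hT : T.IsTree)
    (hK : ∀ v : V, (T.induce {x : {s : Set V // IsMaxClique G s} | v ∈ x.val}).Connected)
    (h : T.Adj Q Q') (hR : Q.val ∩ Q'.val ⊆ R.val)
    (hside : ¬ (T.deleteEdges {s(Q, Q')}).Reachable R Q') : R = Q := by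
  by_contra hRQ
  obtain ⟨s, hsQ, hsQ'⟩ := exists_mem_inter hconn hT hK h
  obtain ⟨q, hqQ, hqR⟩ := Q.2.exists_mem_notMem R.2 fun e => hRQ (Subtype.ext e).symm
  obtain ⟨r, hrR, hqr⟩ := R.2.exists_not_adj hqR
  obtain ⟨x, hxQ', hxQ⟩ := Q'.2.exists_mem_notMem Q.2 fun e => h.ne (Subtype.ext e).symm
  have hqr' : q ≠ r := fun e => hqR (e ▸ hrR)
  have hrQ : r ∉ Q.val := fun hr => hqr (Q.2.1 hqQ hr hqr')
  have hqQ' : q ∉ Q'.val := fun hq => hqR (hR ⟨hqQ, hq⟩)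
  have hxS : ¬ (x ∈ Q.val ∧ x ∈ Q'.val) := fun e => hxQ e.1
  -- Any clique containing `x` is on the side of `Q'`, so `x` shares no clique with `q` or `r`.
  have hrx : ¬ G.Adj r x := by
    intro hadj
    obtain ⟨C, hr, hx⟩ := exists_isMaxClique_of_adj hadj
    exact hside ((reachable_deleteEdge hK (fun e => hrQ e.1) hrR hr).trans
      (reachable_deleteEdge hK hxS hx hxQ'))
  have hqx : ¬ G.Adj q x := by
    intro hadj
    obtain ⟨C, hq, hx⟩ := exists_isMaxClique_of_adj hadj
    exact not_reachable_deleteEdge hT h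
      ((reachable_deleteEdge hK (fun e => hqQ' e.2) hqQ hq).trans
        (reachable_deleteEdge hK hxS hx hxQ'))
  have hrx' : r ≠ x := by
    rintro rfl
    exact hside (reachable_deleteEdge hK hxS hrR hxQ')
  exact hclaw.false_of_claw
    (Q.2.1 hsQ hqQ fun e => hqQ' (e ▸ hsQ'))
    (R.2.1 (hR ⟨hsQ, hsQ'⟩) hrR fun e => hrQ (e ▸ hsQ))
    (Q'.2.1 hsQ' hxQ' fun e => hxQ (e ▸ hsQ))
    hqr' (fun e => hxQ (e ▸ hqQ)) hrx' hqr hqx hrx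

/-- The ends of an edge of a clique tree are the only maximal cliques containing its separator. -/
lemma eq_or_eq_of_inter_subset [Finite V] (hconn : G.Connected) (hclaw : ClawFree G)
    (hT : T.IsTree)
    (hK : ∀ v : V, (T.induce {x : {s : Set V // IsMaxClique G s} | v ∈ x.val}).Connected)
    (h : T.Adj Q Q') (hR : Q.val ∩ Q'.val ⊆ R.val) : R = Q ∨ R = Q' := by
  by_cases hside : (T.deleteEdges {s(Q, Q')}).Reachable R Q'
  · right
    refine eq_of_inter_subset_of_not_reachable hconn hclaw hT hK h.symm
      (Set.inter_comm _ _ ▸ hR) fun hRQ => ?_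
    rw [Sym2.eq_swap] at hRQ
    exact not_reachable_deleteEdge hT h (hRQ.symm.trans hside)
  · exact Or.inl (eq_of_inter_subset_of_not_reachable hconn hclaw hT hK h hR hside)

/-- Every clique on the path of a clique tree from `Q` to `Q'` contains `Q ∩ Q'`. -/
lemma inter_subset_of_mem_support (hT : T.IsTree)
    (hK : ∀ v : V, (T.induce {x : {s : Set V // IsMaxClique G s} | v ∈ x.val}).Connected)
    {p : T.Walk Q Q'} (hp : p.IsPath) (hR : R ∈ p.support) : Q.val ∩ Q'.val ⊆ R.val := by
  rintro v ⟨hQ, hQ'⟩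
  obtain ⟨w, hw⟩ := ((hK v).preconnected ⟨Q, hQ⟩ ⟨Q', hQ'⟩).exists_isPath
  let f := (SimpleGraph.Embedding.induce (G := T)
    {x : {s : Set V // IsMaxClique G s} | v ∈ x.val}).toHom
  have hpath : (w.map f).IsPath :=
    SimpleGraph.Walk.IsPath.map Subtype.val_injective hw
  have heq : p = w.map f :=
    congrArg Subtype.val
      ((hT.isAcyclic.subsingleton_path Q Q').elim ⟨p, hp⟩ ⟨w.map f, hpath⟩)
  have hmem : R ∈ w.support.map f := SimpleGraph.Walk.support_map f w ▸ heq ▸ hR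
  obtain ⟨A, -, rfl⟩ := List.mem_map.mp hmem
  exact A.2

lemma cliqueTree_le [Finite V] (hconn : G.Connected) (hclaw : ClawFree G)
    {T₁ T₂ : SimpleGraph {s : Set V // IsMaxClique G s}}
    (h₁ : T₁.IsTree)
    (hK₁ : ∀ v : V, (T₁.induce {x : {s : Set V // IsMaxClique G s} | v ∈ x.val}).Connected)
    (h₂ : T₂.IsTree)
    (hK₂ : ∀ v : V, (T₂.induce {x : {s : Set V // IsMaxClique G s} | v ∈ x.val}).Connected) :
    T₁ ≤ T₂ := by
  intro Q Q' h
  obtain ⟨p, hp⟩ := (h₂.connected.preconnected Q Q').exists_isPath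
  cases p with
  | nil => exact (h.ne rfl).elim
  | cons hadj p' =>
    rcases eq_or_eq_of_inter_subset hconn hclaw h₁ hK₁ h
      (inter_subset_of_mem_support h₂ hK₂ hp
        (List.mem_cons_of_mem _ p'.start_mem_support)) with rfl | rfl
    · exact (hadj.ne rfl).elim
    · exact hadj

end CliqueTree

/-- a finite connected claw-free chordal graph has a unique clique tree:
any two clique trees on the set of maximal cliques have the same edge set. -/
theorem stmt_4 {V : Type*} [Fintype V] (G : SimpleGraph V)
    (hconn : G.Connected) (hclaw : ClawFree G) (hchord : Chordal G)
    (T₁ T₂ : SimpleGraph {s : Set V // IsMaxClique G s})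
    (h₁ : T₁.IsTree)
    (hK₁ : ∀ v : V, (T₁.induce {x : {s : Set V // IsMaxClique G s} | v ∈ x.val}).Connected)
    (h₂ : T₂.IsTree)
    (hK₂ : ∀ v : V, (T₂.induce {x : {s : Set V // IsMaxClique G s} | v ∈ x.val}).Connected) :
    T₁.edgeSet = T₂.edgeSet := by
  rw [le_antisymm (cliqueTree_le hconn hclaw h₁ hK₁ h₂ hK₂)
    (cliqueTree_le hconn hclaw h₂ hK₂ h₁ hK₁)]
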